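/- For every R > 0 and every p with p0_adv < p ≤ 1, there exists n₀ such that for all n ≥ n₀ and every code C ⊆ {0,1}^n with |C| ≥ 2^{Rn}, there exists a subset C' ⊆ C with |C'| ≥ |C| − 2^{Rn/2} such that every x ∈ C' is confusable with another codeword of C: for every x ∈ C' there exists y ∈ C with y ≠ x and LCS(x,y) > (1−p)n. -/

import Mathlib

/-! The codewords of `C` confusable with no other codeword of `C` are pairwise non-confusable, so
they themselves form an adversarial code. For `p0adv < q < p`, distinct codewords of this code have
all common subsequences of length at most `(1 - p) n < (1 - q) n`, while no such code of positive
rate exists for large `n`, because `q` lies above the supremum. -/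

open scoped Classical

/-- `advGood p` : there is a rate `δ > 0` such that for infinitely many `n` there is a
code `C ⊆ {0,1}^n` of size at least `2^{δn}` in which every two distinct codewords
have longest common subsequence of length less than `(1−p)n`. -/
def advGood (p : ℝ) : Prop :=
  ∃ δ : ℝ, 0 < δ ∧ ∀ n₀ : ℕ, ∃ n ≥ n₀, ∃ C : Finset (List Bool),
    (∀ c ∈ C, c.length = n) ∧ (C.card : ℝ) ≥ 2 ^ (δ * n) ∧
    ∀ x ∈ C, ∀ y ∈ C, x ≠ y →
      ∀ z : List Bool, z.Sublist x → z.Sublist y → (z.length : ℝ) < (1 - p) * n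

/-- The zero-rate threshold for adversarial deletions. -/
noncomputable def p0adv : ℝ := sSup {p : ℝ | p ∈ Set.Icc (0 : ℝ) 1 ∧ advGood p}

/-- The output of the deterministic online deletion channel described by `f` on input
`x`: bit `x_i` is transmitted iff `f` applied to the prefix `x_1…x_i` returns `true`. -/
def onlineOutput (f : List Bool → Bool) (x : List Bool) : List Bool :=
  (List.range x.length).filterMap
    (fun i => if f (x.take (i + 1)) then some (x.getD i false) else none)

/-- The online channel `f` deletes at most `pn` bits on every input of length `n`. -/
def deletesAtMost (f : List Bool → Bool) (n : ℕ) (p : ℝ) : Prop :=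
  ∀ x : List Bool, x.length = n → ((n - (onlineOutput f x).length : ℕ) : ℝ) ≤ p * n

/-- `onGood p` : there is a rate `δ > 0` such that for every `ε > 0` there are
infinitely many `n` admitting a code `C ⊆ {0,1}^n` of size at least `2^{δn}` and a
decoder `Dec` into `C` such that every deterministic online deletion channel deleting
at most `pn` bits on every input miscommunicates at most `ε|C|` codewords. -/
def onGood (p : ℝ) : Prop :=
  ∃ δ : ℝ, 0 < δ ∧ ∀ ε : ℝ, 0 < ε → ∀ n₀ : ℕ, ∃ n ≥ n₀, ∃ C : Finset (List Bool),
    (∀ c ∈ C, c.length = n) ∧ (C.card : ℝ) ≥ 2 ^ (δ * n) ∧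
    ∃ Dec : List Bool → List Bool, (∀ s, Dec s ∈ C) ∧
      ∀ f : List Bool → Bool, deletesAtMost f n p →
        ((C.filter (fun c => Dec (onlineOutput f c) ≠ c)).card : ℝ) ≤ ε * C.card

/-- The deterministic zero-rate threshold for online deletions. -/
noncomputable def p0ond : ℝ := sSup {p : ℝ | p ∈ Set.Icc (0 : ℝ) 1 ∧ onGood p}

/-- Confusability of two codewords of length `n` under fewer than `p n` adversarial deletions. The
block length is a parameter, so that the relation is defined for arbitrary words, and the inequality
`LCS(x, y) > (1 - p) n` is witnessed by a common subsequence. -/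
def Confusable (p : ℝ) (n : ℕ) (x y : List Bool) : Prop :=
  ∃ z : List Bool, z.Sublist x ∧ z.Sublist y ∧ (1 - p) * n < (z.length : ℝ)

/-- The codewords of `C` that an adversary can make ambiguous: those confusable with another
codeword of `C`. -/
noncomputable def confusableCodewords (p : ℝ) (n : ℕ) (C : Finset (List Bool)) :
    Finset (List Bool) :=
  {x ∈ C | ∃ y ∈ C, y ≠ x ∧ Confusable p n x y}

theorem confusableCodewords_subset (p : ℝ) (n : ℕ) (C : Finset (List Bool)) :
    confusableCodewords p n C ⊆ C :=
  Finset.filter_subset _ C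

theorem pairwise_not_confusable_sdiff_confusableCodewords (p : ℝ) (n : ℕ)
    (C : Finset (List Bool)) :
    (↑(C \ confusableCodewords p n C) : Set (List Bool)).Pairwise
      fun x y => ¬ Confusable p n x y := by
  intro x hx y hy hxy hconf
  obtain ⟨hxC, hx_isolated⟩ := Finset.mem_sdiff.1 hx
  have hyC : y ∈ C := (Finset.mem_sdiff.1 hy).1
  exact hx_isolated (Finset.mem_filter.2 ⟨hxC, y, hyC, hxy.symm, hconf⟩)

theorem length_lt_of_not_confusable {p q : ℝ} {n : ℕ} {x y z : List Bool} (hqp : q < p)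
    (hn : 0 < n) (hxy : ¬ Confusable p n x y) (hzx : z.Sublist x) (hzy : z.Sublist y) :
    (z.length : ℝ) < (1 - q) * n :=
  calc (z.length : ℝ) ≤ (1 - p) * n := not_lt.1 fun hz => hxy ⟨z, hzx, hzy, hz⟩
    _ < (1 - q) * n := by gcongr

-- The real supremum of the empty set is `0`, so no adversarially good rate has to be exhibited.
theorem p0adv_nonneg : 0 ≤ p0adv :=
  Real.sSup_nonneg fun _ hp => hp.1.1

theorem not_advGood_of_p0adv_lt {p : ℝ} (hp : p0adv < p) (hp1 : p ≤ 1) : ¬ advGood p := by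
  intro hgood
  have hbdd : BddAbove {q : ℝ | q ∈ Set.Icc (0 : ℝ) 1 ∧ advGood q} := ⟨1, fun _ hq => hq.1.2⟩
  exact hp.not_ge (le_csSup hbdd ⟨⟨p0adv_nonneg.trans hp.le, hp1⟩, hgood⟩)

theorem exists_forall_card_lt_of_pairwise_not_confusable {p δ : ℝ} (hp : p0adv < p)
    (hp1 : p ≤ 1) (hδ : 0 < δ) :
    ∃ n₀ : ℕ, ∀ n ≥ n₀, ∀ C : Finset (List Bool), (∀ c ∈ C, c.length = n) →
      (C : Set (List Bool)).Pairwise (fun x y => ¬ Confusable p n x y) →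
      (C.card : ℝ) < 2 ^ (δ * n) := by
  obtain ⟨q, hq, hqp⟩ := exists_between hp
  by_contra! hlarge
  refine not_advGood_of_p0adv_lt hq (hqp.le.trans hp1) ⟨δ, hδ, fun n₀ => ?_⟩
  -- Only for `n > 0` is `(1 - p) * n` strictly smaller than `(1 - q) * n`.
  obtain ⟨n, hn, C, hC, hpair, hcard⟩ := hlarge (n₀ + 1)
  have hn_pos : 0 < n := Nat.zero_lt_of_lt hn
  exact ⟨n, Nat.le_of_succ_le hn, C, hC, hcard, fun x hx y hy hxy _ =>
    length_lt_of_not_confusable hqp hn_pos (hpair hx hy hxy)⟩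

theorem almost_all_codewords_confusable_general {p δ : ℝ} (hp : p0adv < p) (hp1 : p ≤ 1)
    (hδ : 0 < δ) :
    ∃ n₀ : ℕ, ∀ n ≥ n₀, ∀ C : Finset (List Bool), (∀ c ∈ C, c.length = n) →
      (C.card : ℝ) - 2 ^ (δ * n) < (confusableCodewords p n C).card := by
  obtain ⟨n₀, hn₀⟩ := exists_forall_card_lt_of_pairwise_not_confusable hp hp1 hδ
  refine ⟨n₀, fun n hn C hC => ?_⟩
  have hisolated : ((C \ confusableCodewords p n C).card : ℝ) < 2 ^ (δ * n) :=
    hn₀ n hn _ (fun c hc => hC c (Finset.sdiff_subset hc))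
      (pairwise_not_confusable_sdiff_confusableCodewords p n C)
  rw [Finset.cast_card_sdiff (confusableCodewords_subset p n C)] at hisolated
  exact sub_lt_comm.1 hisolated

/-- For every `R > 0` and `p0_adv < p ≤ 1`, for all sufficiently large `n` and every
code `C ⊆ {0,1}^n` with `|C| ≥ 2^{Rn}`, all but at most `2^{Rn/2}` codewords are
confusable with another codeword of `C` (i.e., have a common subsequence with it of
length more than `(1−p)n`). -/
theorem almost_all_codewords_confusable (R p : ℝ) (hR : 0 < R)
    (hp1 : p0adv < p) (hp2 : p ≤ 1) :
    ∃ n₀ : ℕ, ∀ n ≥ n₀, ∀ C : Finset (List Bool), (∀ c ∈ C, c.length = n) →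
      (C.card : ℝ) ≥ 2 ^ (R * n) →
      ∃ C' ⊆ C, ((C'.card : ℝ) ≥ (C.card : ℝ) - 2 ^ (R * n / 2)) ∧
        ∀ x ∈ C', ∃ y ∈ C, y ≠ x ∧
          ∃ z : List Bool, z.Sublist x ∧ z.Sublist y ∧ (1 - p) * n < (z.length : ℝ) := by
  obtain ⟨n₀, hn₀⟩ := almost_all_codewords_confusable_general hp1 hp2 (half_pos hR)
  refine ⟨n₀, fun n hn C hC _ => ⟨confusableCodewords p n C,
    confusableCodewords_subset p n C, ?_, fun x hx => (Finset.mem_filter.1 hx).2⟩⟩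
  simpa only [div_mul_eq_mul_div] using (hn₀ n hn C hC).le
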